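/- Let γ > 1, R > 0, T∞ > 0, m > 0 and u∞ < 0 with m u∞² > γRT∞. Suppose ñ, ũ, T̃, φ̃ : [0,∞) → ℝ satisfy the hypotheses of the Bernoulli law (so that φ̃(x) = f(ñ(x)) for all x), suppose in addition that φ̃ is twice differentiable with φ̃''(x) = ñ(x) − e^{−φ̃(x)} for all x ≥ 0, and that ñ(x) ∈ (0, c∞] for all x ≥ 0. Then the potential solves the Sagdeev ordinary differential equation: φ̃''(x) = g(φ̃(x)) − e^{−φ̃(x)} for all x ≥ 0, where g : [f(c∞), ∞) → (0, c∞] is the inverse of the restriction of f to (0, c∞]. -/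

import Mathlib

open Real Set Filter

/-!
The stationary equations have three first integrals: the mass flux `n u`, the entropy variable
`T n ^ (1 - γ)` and the Bernoulli quantity `φ - m u² / 2 - γ R T / (γ - 1)`. Their values are read
off from the far field. The first two express `u²` and `T` through `n`, and the third then becomes
`φ = f ∘ n`; wherever `g` inverts `f` on the range of `n`, this says `n = g ∘ φ`, which turns
Poisson's equation into an equation for `φ` alone.
-/

/-- The Sagdeev function `f` as a function of the ion density `n`: the potential at which the flow
with far-field density `1`, temperature `Tinf` and velocity `uinf` has density `n`. -/
noncomputable def sagdeevFunction (γ R Tinf m uinf n : ℝ) : ℝ :=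
  (γ * R * Tinf / (γ - 1)) * (n ^ (γ - 1) - 1) + (m * uinf ^ 2 / 2) * (n ^ (-2 : ℝ) - 1)

/-- The stationary equations of an ion flow in an electrostatic potential `φ`, with density `n`,
velocity `u`, temperature `T` and pressure `R T n`. The derivatives on `s` are given explicitly as
the primed functions; the momentum balance is solved for the derivative of the pressure. -/
structure IsStationaryFlow (γ R m : ℝ) (s : Set ℝ) (n u T φ n' u' T' φ' : ℝ → ℝ) : Prop where
  density_pos : ∀ x ∈ s, 0 < n x
  hasDerivWithinAt_density : ∀ x ∈ s, HasDerivWithinAt n (n' x) s x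
  hasDerivWithinAt_velocity : ∀ x ∈ s, HasDerivWithinAt u (u' x) s x
  hasDerivWithinAt_temperature : ∀ x ∈ s, HasDerivWithinAt T (T' x) s x
  hasDerivWithinAt_potential : ∀ x ∈ s, HasDerivWithinAt φ (φ' x) s x
  mass : ∀ x ∈ s, n' x * u x + n x * u' x = 0
  heat : ∀ x ∈ s, u x * T' x + (γ - 1) * T x * u' x = 0
  momentum : ∀ x ∈ s,
    HasDerivWithinAt (fun y => R * T y * n y) (n x * φ' x - m * n x * u x * u' x) s x

theorem eq_of_hasDerivWithinAt_zero_of_tendsto {𝕜 E : Type*} [RCLike 𝕜]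
    [NormedAddCommGroup E] [NormedSpace 𝕜 E] {s : Set 𝕜} (hs : Convex ℝ s)
    {l : Filter 𝕜} [l.NeBot] (hsl : s ∈ l) {F : 𝕜 → E} {L : E}
    (hF : ∀ x ∈ s, HasDerivWithinAt F 0 s x) (hL : Tendsto F l (nhds L)) {x : 𝕜} (hx : x ∈ s) :
    F x = L := by
  have hconst : ∀ y ∈ s, F x = F y := fun y hy => by
    have h := hs.norm_image_sub_le_of_norm_hasDerivWithin_le (C := 0) hF (by simp) hy hx
    rwa [zero_mul, norm_le_zero_iff, sub_eq_zero] at h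
  exact tendsto_nhds_unique (tendsto_const_nhds.congr' (eventually_of_mem hsl hconst)) hL

theorem hasDerivWithinAt_mul_rpow_neg_zero {T n : ℝ → ℝ} {T' n' a x : ℝ} {s : Set ℝ}
    (hT : HasDerivWithinAt T T' s x) (hn : HasDerivWithinAt n n' s x) (hnx : n x ≠ 0)
    (h : T' * n x = a * T x * n') :
    HasDerivWithinAt (fun y => T y * n y ^ (-a)) 0 s x := by
  refine (hT.mul (hn.rpow_const (p := -a) (Or.inl hnx))).congr_deriv ?_
  have hpow : n x ^ (-a) = n x ^ (-a - 1) * n x := by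
    rw [← rpow_add_one hnx, sub_add_cancel]
  rw [hpow]
  linear_combination n x ^ (-a - 1) * h

namespace IsStationaryFlow

variable {γ R m n₀ u₀ T₀ φ₀ x : ℝ} {s : Set ℝ} {l : Filter ℝ} [l.NeBot]
  {n u T φ n' u' T' φ' : ℝ → ℝ}

theorem mass_flux_eq (flow : IsStationaryFlow γ R m s n u T φ n' u' T' φ')
    (hs : Convex ℝ s) (hsl : s ∈ l)
    (hn : Tendsto n l (nhds n₀)) (hu : Tendsto u l (nhds u₀)) (hx : x ∈ s) :
    n x * u x = n₀ * u₀ :=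
  eq_of_hasDerivWithinAt_zero_of_tendsto hs hsl
    (fun y hy => ((flow.hasDerivWithinAt_density y hy).mul
      (flow.hasDerivWithinAt_velocity y hy)).congr_deriv (flow.mass y hy))
    (hn.mul hu) hx

theorem deriv_temperature_mul_density (flow : IsStationaryFlow γ R m s n u T φ n' u' T' φ')
    (hx : x ∈ s) (hux : u x ≠ 0) : T' x * n x = (γ - 1) * T x * n' x := by
  apply mul_left_cancel₀ hux
  linear_combination n x * flow.heat x hx - (γ - 1) * T x * flow.mass x hx

theorem temperature_eq (flow : IsStationaryFlow γ R m s n u T φ n' u' T' φ')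
    (hs : Convex ℝ s) (hsl : s ∈ l) (hu0 : ∀ x ∈ s, u x ≠ 0)
    (hn : Tendsto n l (nhds 1)) (hT : Tendsto T l (nhds T₀)) (hx : x ∈ s) :
    T x = T₀ * n x ^ (γ - 1) := by
  have hlim : Tendsto (fun y => T y * n y ^ (-(γ - 1))) l (nhds T₀) := by
    simpa only [one_rpow, mul_one] using
      hT.mul (hn.rpow_const (p := -(γ - 1)) (Or.inl one_ne_zero))
  have hentropy : T x * n x ^ (-(γ - 1)) = T₀ :=
    eq_of_hasDerivWithinAt_zero_of_tendsto hs hsl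
      (fun y hy => hasDerivWithinAt_mul_rpow_neg_zero (flow.hasDerivWithinAt_temperature y hy)
        (flow.hasDerivWithinAt_density y hy) (flow.density_pos y hy).ne'
        (flow.deriv_temperature_mul_density hy (hu0 y hy))) hlim hx
  rw [← hentropy, mul_assoc, ← rpow_add (flow.density_pos x hx), neg_add_cancel, rpow_zero,
    mul_one]

theorem hasDerivWithinAt_bernoulli_zero (flow : IsStationaryFlow γ R m s n u T φ n' u' T' φ')
    (hs : UniqueDiffOn ℝ s) (hγ : γ ≠ 1) (hx : x ∈ s) (hux : u x ≠ 0) :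
    HasDerivWithinAt (fun y => φ y - m / 2 * u y ^ 2 - γ * R / (γ - 1) * T y) 0 s x := by
  have hnx : n x ≠ 0 := (flow.density_pos x hx).ne'
  have hγ' : γ - 1 ≠ 0 := sub_ne_zero.mpr hγ
  have hpressure : n x * φ' x - m * n x * u x * u' x = R * T' x * n x + R * T x * n' x :=
    (hs x hx).eq_deriv _ (flow.momentum x hx)
      (((flow.hasDerivWithinAt_temperature x hx).const_mul R).mul
        (flow.hasDerivWithinAt_density x hx))
  have hheat := flow.deriv_temperature_mul_density hx hux
  have henthalpy : φ' x - m * u x * u' x - γ * R / (γ - 1) * T' x = 0 := by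
    field_simp
    apply mul_left_cancel₀ hnx
    linear_combination (γ - 1) * hpressure - R * hheat
  refine (((flow.hasDerivWithinAt_potential x hx).sub
    (((flow.hasDerivWithinAt_velocity x hx).pow 2).const_mul (m / 2))).sub
      ((flow.hasDerivWithinAt_temperature x hx).const_mul (γ * R / (γ - 1)))).congr_deriv ?_
  linear_combination henthalpy

theorem bernoulli_eq (flow : IsStationaryFlow γ R m s n u T φ n' u' T' φ')
    (hs : Convex ℝ s) (hs' : UniqueDiffOn ℝ s) (hsl : s ∈ l) (hγ : γ ≠ 1)
    (hu0 : ∀ x ∈ s, u x ≠ 0) (hu : Tendsto u l (nhds u₀)) (hT : Tendsto T l (nhds T₀))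
    (hφ : Tendsto φ l (nhds φ₀)) (hx : x ∈ s) :
    φ x - m / 2 * u x ^ 2 - γ * R / (γ - 1) * T x =
      φ₀ - m / 2 * u₀ ^ 2 - γ * R / (γ - 1) * T₀ :=
  eq_of_hasDerivWithinAt_zero_of_tendsto hs hsl
    (fun y hy => flow.hasDerivWithinAt_bernoulli_zero hs' hγ hy (hu0 y hy))
    ((hφ.sub ((hu.pow 2).const_mul _)).sub (hT.const_mul _)) hx

theorem potential_eq_sagdeevFunction (flow : IsStationaryFlow γ R m s n u T φ n' u' T' φ')
    (hs : Convex ℝ s) (hs' : UniqueDiffOn ℝ s) (hsl : s ∈ l) (hγ : γ ≠ 1) (hu₀ : u₀ ≠ 0)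
    (hn : Tendsto n l (nhds 1)) (hu : Tendsto u l (nhds u₀)) (hT : Tendsto T l (nhds T₀))
    (hφ : Tendsto φ l (nhds 0)) (hx : x ∈ s) :
    φ x = sagdeevFunction γ R T₀ m u₀ (n x) := by
  have hflux : ∀ y ∈ s, n y * u y = u₀ := fun y hy => by
    simpa only [one_mul] using flow.mass_flux_eq hs hsl hn hu hy
  have hu0 : ∀ y ∈ s, u y ≠ 0 := fun y hy =>
    right_ne_zero_of_mul ((hflux y hy).trans_ne hu₀)
  have husq : u x ^ 2 = u₀ ^ 2 * n x ^ (-2 : ℝ) := by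
    have hnx := flow.density_pos x hx
    rw [← hflux x hx, rpow_neg hnx.le, rpow_two]
    field_simp
  have hbernoulli := flow.bernoulli_eq hs hs' hsl hγ hu0 hu hT hφ hx
  rw [husq, flow.temperature_eq hs hsl hu0 hn hT hx] at hbernoulli
  unfold sagdeevFunction
  linear_combination hbernoulli

end IsStationaryFlow

theorem stationary_sagdeev_ode_general {γ R Tinf m uinf : ℝ} {s D : Set ℝ} {l : Filter ℝ}
    [l.NeBot] {n u T φ n' u' T' φ' g : ℝ → ℝ}
    (hs : Convex ℝ s) (hs' : UniqueDiffOn ℝ s) (hsl : s ∈ l)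
    (flow : IsStationaryFlow γ R m s n u T φ n' u' T' φ') (hγ : γ ≠ 1) (hu₀ : uinf ≠ 0)
    (hn : Tendsto n l (nhds 1)) (hu : Tendsto u l (nhds uinf)) (hT : Tendsto T l (nhds Tinf))
    (hφ : Tendsto φ l (nhds 0))
    (hg : LeftInvOn g (sagdeevFunction γ R Tinf m uinf) D) (hrange : MapsTo n s D)
    (hpoisson : ∀ x ∈ s, HasDerivWithinAt φ' (n x - Real.exp (-φ x)) s x) :
    ∀ x ∈ s, HasDerivWithinAt φ' (g (φ x) - Real.exp (-φ x)) s x := by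
  intro x hx
  have hgφ : g (φ x) = n x := by
    rw [flow.potential_eq_sagdeevFunction hs hs' hsl hγ hu₀ hn hu hT hφ hx, hg (hrange hx)]
  rw [hgφ]
  exact hpoisson x hx

/-- Under the hypotheses of the Bernoulli law and the Poisson equation
`φ̃'' = ñ − e^{−φ̃}`, with `ñ` taking values in `(0, c∞]`, the potential solves the
Sagdeev ordinary differential equation `φ̃'' = g(φ̃) − e^{−φ̃}`, where `g` is the
inverse of the restriction of the Sagdeev function `f` to `(0, c∞]`. -/
theorem stationary_sagdeev_ode
    (γ R Tinf m uinf : ℝ) (hγ : 1 < γ) (hR : 0 < R) (hT : 0 < Tinf) (hm : 0 < m)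
    (hu : uinf < 0) (hsup : γ * R * Tinf < m * uinf ^ 2)
    (f : ℝ → ℝ)
    (hf : ∀ n : ℝ, f n =
      (γ * R * Tinf / (γ - 1)) * (n ^ (γ - 1) - 1)
        + (m * uinf ^ 2 / 2) * (n ^ (-2 : ℝ) - 1))
    (cinf : ℝ) (hc : cinf = (m * uinf ^ 2 / (γ * R * Tinf)) ^ ((1 : ℝ) / (γ + 1)))
    (g : ℝ → ℝ)
    (hg : ∀ y ∈ Ioc (0 : ℝ) cinf, g (f y) = y)
    (n u T φ n' u' T' φd p' : ℝ → ℝ)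
    (hn : ∀ x ∈ Ici (0 : ℝ), HasDerivWithinAt n (n' x) (Ici 0) x)
    (hud : ∀ x ∈ Ici (0 : ℝ), HasDerivWithinAt u (u' x) (Ici 0) x)
    (hTd : ∀ x ∈ Ici (0 : ℝ), HasDerivWithinAt T (T' x) (Ici 0) x)
    (hφd : ∀ x ∈ Ici (0 : ℝ), HasDerivWithinAt φ (φd x) (Ici 0) x)
    (hpd : ∀ x ∈ Ici (0 : ℝ),
      HasDerivWithinAt (fun y => R * T y * n y) (p' x) (Ici 0) x)
    (hnpos : ∀ x ∈ Ici (0 : ℝ), 0 < n x)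
    (hTpos : ∀ x ∈ Ici (0 : ℝ), 0 < T x)
    (hmass : ∀ x ∈ Ici (0 : ℝ), n' x * u x + n x * u' x = 0)
    (htemp : ∀ x ∈ Ici (0 : ℝ), u x * T' x + (γ - 1) * T x * u' x = 0)
    (hmom : ∀ x ∈ Ici (0 : ℝ), m * n x * u x * u' x + p' x = n x * φd x)
    (hnlim : Tendsto n atTop (nhds 1))
    (hulim : Tendsto u atTop (nhds uinf))
    (hTlim : Tendsto T atTop (nhds Tinf))
    (hφlim : Tendsto φ atTop (nhds 0))
    (hpoisson : ∀ x ∈ Ici (0 : ℝ),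
      HasDerivWithinAt φd (n x - Real.exp (-φ x)) (Ici 0) x)
    (hrange : ∀ x ∈ Ici (0 : ℝ), n x ∈ Ioc 0 cinf) :
    ∀ x ∈ Ici (0 : ℝ),
      HasDerivWithinAt φd (g (φ x) - Real.exp (-φ x)) (Ici 0) x := by
  obtain rfl : f = sagdeevFunction γ R Tinf m uinf := funext hf
  have flow : IsStationaryFlow γ R m (Ici 0) n u T φ n' u' T' φd :=
    ⟨hnpos, hn, hud, hTd, hφd, hmass, htemp,
      fun x hx => (hpd x hx).congr_deriv (eq_sub_of_add_eq' (hmom x hx))⟩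
  exact stationary_sagdeev_ode_general (convex_Ici 0) (uniqueDiffOn_Ici 0) (Ici_mem_atTop 0)
    flow hγ.ne' hu.ne hnlim hulim hTlim hφlim hg hrange hpoisson
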